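/- Let R be a (possibly noncommutative) ring, L0, L1 ∈ R, and Ȳ an element of an R-module M. Define the sequence Y : ℕ → M by Y 0 = 0, Y 1 = Ȳ, and Y (p+2) = L0 • Y p + L1 • Y (p+1). Then for all p ≥ 1, Y p = (∑ over all words w in the letters L0, L1 of length p-1 containing at most ⌊(p-1)/2⌋ letters L0, where each occurrence of L0 counts for length 2, i.e. over all words with t factors L0 and p-1-2t factors L1 for 0 ≤ t ≤ ⌊(p-1)/2⌋, of the product of the letters of w) • Ȳ. -/

import Mathlib

/-- The sum over all words consisting of `u` copies of `L0` and `v` copies of `L1`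
of the ordered product of the letters.  A word is encoded as a function
`Fin (u+v) → Bool`, with `false` standing for `L0` and `true` for `L1`. -/
def wordSum {R : Type*} [Ring R] (L0 L1 : R) (u v : ℕ) : R :=
  ∑ w ∈ Finset.univ.filter (fun f : Fin (u + v) → Bool =>
      (Finset.univ.filter (fun i => f i = false)).card = u),
    (List.ofFn fun i => if w i then L1 else L0).prod

/-!
The word sums are noncommutative binomial coefficients: splitting off the first letter of a word
gives Pascal's rule `W (n + 1) (u + 1) = L1 * W n (u + 1) + L0 * W n u`, where `W n u` sums the
words of length `n` with `u` letters `L0`.  Counting each `L0` for length `2` groups the words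
along the diagonals of this Pascal triangle, and, as for the Fibonacci numbers, the diagonal sums
`D n = ∑ u, W (n - u) u` satisfy `D (n + 2) = L0 * D n + L1 * D (n + 1)`.
-/

section WordSums

open Finset

/-- The number of occurrences of the letter `false` (which stands for `L0`) in a word. -/
def falseCount {n : ℕ} (w : Fin n → Bool) : ℕ := #{i | w i = false}

theorem falseCount_le {n : ℕ} (w : Fin n → Bool) : falseCount w ≤ n :=
  card_finset_fin_le _

theorem falseCount_cons {n : ℕ} (c : Bool) (w : Fin n → Bool) :
    falseCount (Fin.cons c w : Fin (n + 1) → Bool) = falseCount w + if c then 0 else 1 := by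
  rw [falseCount, Fin.card_filter_univ_succ]
  cases c <;> simp [falseCount]

/-- The ordered product of the letters of a word, read with `a` for `false` and `b` for `true`. -/
def wordProd {R : Type*} [Monoid R] (a b : R) {n : ℕ} (w : Fin n → Bool) : R :=
  (List.ofFn fun i => if w i then b else a).prod

theorem wordProd_cons {R : Type*} [Monoid R] (a b : R) {n : ℕ} (c : Bool) (w : Fin n → Bool) :
    wordProd a b (Fin.cons c w : Fin (n + 1) → Bool) = (if c then b else a) * wordProd a b w := by
  simp [wordProd, List.ofFn_succ]

theorem sum_fin_cons {α M : Type*} [Fintype α] [AddCommMonoid M] {n : ℕ}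
    (f : (Fin (n + 1) → α) → M) :
    ∑ w, f w = ∑ c, ∑ w : Fin n → α, f (Fin.cons c w) := by
  rw [← (Fin.consEquiv fun _ => α).sum_comp, Fintype.sum_prod_type]
  rfl

variable {R : Type*} [Semiring R] (a b : R)

/-- The noncommutative binomial coefficient: the sum of the products of all words of length `n`
with exactly `u` letters `a`.  Unlike `wordSum` it is indexed by the total length, which is what
makes Pascal's rule a recursion over the first letter. -/
def binomialWordSum (n u : ℕ) : R :=
  ∑ w : Fin n → Bool with falseCount w = u, wordProd a b w

theorem binomialWordSum_zero_zero : binomialWordSum a b 0 0 = 1 := by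
  simp [binomialWordSum, falseCount, wordProd]

theorem binomialWordSum_eq_zero_of_lt {n u : ℕ} (h : n < u) : binomialWordSum a b n u = 0 := by
  rw [binomialWordSum, filter_false_of_mem, sum_empty]
  exact fun w _ => ((falseCount_le w).trans_lt h).ne

theorem binomialWordSum_succ (n u : ℕ) :
    binomialWordSum a b (n + 1) u =
      b * binomialWordSum a b n u +
        a * ∑ w : Fin n → Bool with falseCount w + 1 = u, wordProd a b w := by
  simp only [binomialWordSum, sum_filter, sum_fin_cons, Fintype.sum_bool, falseCount_cons,
    wordProd_cons, mul_sum, mul_ite, mul_zero, if_true, Bool.false_eq_true, if_false, add_zero]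

theorem binomialWordSum_succ_zero (n : ℕ) :
    binomialWordSum a b (n + 1) 0 = b * binomialWordSum a b n 0 := by
  simp [binomialWordSum_succ]

theorem binomialWordSum_succ_succ (n u : ℕ) :
    binomialWordSum a b (n + 1) (u + 1) =
      b * binomialWordSum a b n (u + 1) + a * binomialWordSum a b n u := by
  rw [binomialWordSum_succ]
  simp only [Nat.add_right_cancel_iff, binomialWordSum]

/-- The sum of the products of all words of weighted length `n`, where the letter `a` counts for
length `2` and `b` for length `1`: such a word with `u` letters `a` has `n - u` letters, so this
is a diagonal sum in the Pascal triangle of the `binomialWordSum a b`. -/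
def diagonalWordSum (n : ℕ) : R :=
  ∑ x ∈ antidiagonal n, binomialWordSum a b x.1 x.2

theorem diagonalWordSum_zero : diagonalWordSum a b 0 = 1 := by
  simp [diagonalWordSum, binomialWordSum_zero_zero]

theorem diagonalWordSum_one : diagonalWordSum a b 1 = b := by
  simp [diagonalWordSum, Nat.sum_antidiagonal_succ, binomialWordSum_succ_zero,
    binomialWordSum_zero_zero, binomialWordSum_eq_zero_of_lt]

theorem diagonalWordSum_add_two (n : ℕ) :
    diagonalWordSum a b (n + 2) =
      a * diagonalWordSum a b n + b * diagonalWordSum a b (n + 1) := by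
  have top_term_eq_zero : binomialWordSum a b 0 (n + 2) = 0 :=
    binomialWordSum_eq_zero_of_lt a b (by omega)
  simp only [diagonalWordSum]
  rw [Nat.sum_antidiagonal_succ, top_term_eq_zero, zero_add, Nat.sum_antidiagonal_succ',
    Nat.sum_antidiagonal_succ']
  simp only [binomialWordSum_succ_zero, binomialWordSum_succ_succ, sum_add_distrib, mul_sum,
    mul_add]
  abel

theorem diagonalWordSum_eq_sum_range (n : ℕ) :
    diagonalWordSum a b n = ∑ u ∈ range (n / 2 + 1), binomialWordSum a b (n - u) u := by
  rw [diagonalWordSum, ← Nat.sum_antidiagonal_swap, Nat.sum_antidiagonal_eq_sum_range_succ_mk]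
  refine (sum_subset (range_mono (by omega)) fun u _ hu => ?_).symm
  rw [mem_range] at hu
  have h_lt : n - u < u := by omega
  exact binomialWordSum_eq_zero_of_lt a b h_lt

end WordSums

theorem wordSum_eq_binomialWordSum {R : Type*} [Ring R] (a b : R) (u v : ℕ) :
    wordSum a b u v = binomialWordSum a b (u + v) u :=
  rfl

theorem diagonalWordSum_eq_sum_wordSum {R : Type*} [Ring R] (a b : R) (n : ℕ) :
    diagonalWordSum a b n = ∑ u ∈ Finset.range (n / 2 + 1), wordSum a b u (n - 2 * u) := by
  rw [diagonalWordSum_eq_sum_range]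
  refine Finset.sum_congr rfl fun u hu => ?_
  rw [Finset.mem_range] at hu
  rw [wordSum_eq_binomialWordSum, show u + (n - 2 * u) = n - u by omega]

theorem cauchy_solution_general {R M : Type*} [Semiring R] [AddCommMonoid M] [Module R M]
    (L0 L1 : R) (Y : ℕ → M) (h0 : Y 0 = 0)
    (hrec : ∀ p : ℕ, Y (p + 2) = L0 • Y p + L1 • Y (p + 1)) (n : ℕ) :
    Y (n + 1) = diagonalWordSum L0 L1 n • Y 1 := by
  induction n using Nat.twoStepInduction with
  | zero => rw [diagonalWordSum_zero, one_smul]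
  | one => rw [hrec, h0, smul_zero, zero_add, diagonalWordSum_one]
  | more n ih ih' => rw [hrec, ih, ih', diagonalWordSum_add_two, add_smul, mul_smul, mul_smul]

/-- Solution of the noncommutative Cauchy problem in an `R`-module. -/
theorem cauchy_solution {R M : Type*} [Ring R] [AddCommGroup M] [Module R M]
    (L0 L1 : R) (Ybar : M) (Y : ℕ → M)
    (h0 : Y 0 = 0) (h1 : Y 1 = Ybar)
    (hrec : ∀ p : ℕ, Y (p + 2) = L0 • Y p + L1 • Y (p + 1)) :
    ∀ p : ℕ, 1 ≤ p →
      Y p = (∑ t ∈ Finset.range ((p - 1) / 2 + 1),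
              wordSum L0 L1 t (p - 1 - 2 * t)) • Ybar := by
  rintro (_ | n) hp
  · contradiction
  · rw [Nat.add_sub_cancel, ← diagonalWordSum_eq_sum_wordSum, ← h1,
      cauchy_solution_general L0 L1 Y h0 hrec]
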